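/- arXiv:2602.23311 — 2 statements merged into one kernel-verified Lean document; each statement's English description precedes it below -/
import Mathlib

section
/- For every unconstrained coefficient vector β ∈ ℝ^D and every x ∈ [k_1, a] ∪ [b, k_m], the transformation H is differentiable at x with derivative H′(x) = 1. -/
open MeasureTheory Finset

noncomputable section

/-- The cardinal cubic B-spline. -/
def cubicN (t : ℝ) : ℝ :=
  if 0 ≤ t ∧ t < 1 then t ^ 3 / 6
  else if 1 ≤ t ∧ t < 2 then (-3 * t ^ 3 + 12 * t ^ 2 - 12 * t + 4) / 6
  else if 2 ≤ t ∧ t < 3 then (3 * t ^ 3 - 24 * t ^ 2 + 60 * t - 44) / 6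
  else if 3 ≤ t ∧ t ≤ 4 then (4 - t) ^ 3 / 6
  else 0

/-- Equidistant knots `k_j = k0 + j·k`. -/
def knot (k0 k : ℝ) (j : ℤ) : ℝ := k0 + (j : ℝ) * k

/-- Cubic B-spline basis functions `B_j(x) = N((x − k_{j−3})/k)` for `j = 1, …, J`. -/
def Bspl (k0 k : ℝ) (j : ℕ) (x : ℝ) : ℝ := cubicN ((x - knot k0 k ((j : ℤ) - 3)) / k)

/-- The coefficients `γ_1, …, γ_J` (with `J = D + 7`, `m = D + 5`), defined from the
unconstrained vector `β ∈ ℝ^D`. -/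
def gam (D : ℕ) (k0 k : ℝ) (β : Fin D → ℝ) (j : ℕ) : ℝ :=
  if j = 1 then k0
  else if j = 2 ∨ j = 3 ∨ j = 4 ∨ j = D + 5 ∨ j = D + 6 ∨ j = D + 7 then Real.log k
  else if h : 5 ≤ j ∧ j ≤ D + 4 then
    β ⟨j - 5, by omega⟩ - Real.log ((∑ d, Real.exp (β d)) / ((D : ℝ) * k))
  else 0

/-- The transformation `H`: a cubic B-spline with coefficients
`γ_1 + ∑_{ℓ=2}^j exp(γ_ℓ)` on `[k_1, k_m]` (with `m = D + 5`), and the identity outside. -/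
def Hfun (D : ℕ) (k0 k : ℝ) (β : Fin D → ℝ) (x : ℝ) : ℝ :=
  if knot k0 k 1 ≤ x ∧ x ≤ knot k0 k ((D : ℤ) + 5) then
    ∑ j ∈ Finset.Icc 1 (D + 7),
      Bspl k0 k j x * (gam D k0 k β 1 + ∑ l ∈ Finset.Icc 2 j, Real.exp (gam D k0 k β l))
  else x

/-!
The coefficients `c_j = γ_1 + ∑_{ℓ=2}^j exp γ_ℓ` are partial sums. The boundary increments equal
`k`, and the normalization of `β` makes the `D` interior increments add up to `D * k`; hence
`c_j = k_{j-1}` whenever `j ≤ 4` or `j ≥ D + 4`. Uniform cubic B-splines with the coefficients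
`k_{j-1}` reproduce the identity, so `H - id` is a combination of the `B_j` with `5 ≤ j ≤ D + 3`.
Their supports are contained in `[k_2, k_{D+4}]`, and because `B_j` is continuously differentiable,
its derivative vanishes at the endpoints of its support as well.
-/

theorem hasDerivAt_max_zero_pow {n : ℕ} (hn : 2 ≤ n) (t : ℝ) :
    HasDerivAt (fun s : ℝ => max s 0 ^ n) (n * max t 0 ^ (n - 1)) t := by
  rcases lt_trichotomy t 0 with ht | rfl | ht
  · have heq : (fun s : ℝ => max s 0 ^ n) =ᶠ[nhds t] fun _ => 0 := by
      filter_upwards [eventually_lt_nhds ht] with s hs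
      rw [max_eq_right hs.le, zero_pow (by lia)]
    rw [max_eq_right ht.le, zero_pow (by lia), mul_zero]
    exact (hasDerivAt_const t (0 : ℝ)).congr_of_eventuallyEq heq
  · have hO : (fun s : ℝ => max s 0 ^ n) =O[nhds 0] fun s => ‖s - 0‖ ^ n := by
      refine .of_bound 1 (.of_forall fun s => ?_)
      have hs : |max s 0| ≤ |s| := by
        rw [abs_of_nonneg (le_max_right s 0)]
        exact max_le (le_abs_self s) (abs_nonneg s)
      simpa using pow_le_pow_left₀ (abs_nonneg _) hs n
    rw [max_self, zero_pow (by lia), mul_zero]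
    simpa using (hO.hasFDerivAt (by lia)).hasDerivAt
  · have heq : (fun s : ℝ => max s 0 ^ n) =ᶠ[nhds t] fun s => s ^ n := by
      filter_upwards [eventually_gt_nhds ht] with s hs
      rw [max_eq_left hs.le]
    rw [max_eq_left ht.le]
    exact (hasDerivAt_pow n t).congr_of_eventuallyEq heq

theorem exists_mem_Icc_succ {α : Type*} [LinearOrder α] (f : ℕ → α) {m n : ℕ} (hmn : m < n) {x : α}
    (hx : x ∈ Set.Icc (f m) (f n)) : ∃ i ∈ Ico m n, x ∈ Set.Icc (f i) (f (i + 1)) := by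
  induction n, hmn using Nat.le_induction with
  | base => exact ⟨m, by simp, hx⟩
  | succ n hmn ih =>
    rcases le_total x (f n) with hxn | hxn
    · obtain ⟨i, hi, hxi⟩ := ih ⟨hx.1, hxn⟩
      exact ⟨i, Ico_subset_Ico_right n.le_succ hi, hxi⟩
    · exact ⟨n, mem_Ico.2 ⟨Nat.le_of_succ_le hmn, n.lt_succ_self⟩, hxn, hx.2⟩

theorem sum_exp_sub_log_sum_exp_div {ι : Type*} [Fintype ι] [Nonempty ι] (β : ι → ℝ) {c : ℝ}
    (hc : 0 < c) : ∑ i, Real.exp (β i - Real.log ((∑ d, Real.exp (β d)) / c)) = c := by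
  have hsum : 0 < ∑ d, Real.exp (β d) := sum_pos (fun d _ => Real.exp_pos _) univ_nonempty
  simp only [Real.exp_sub, Real.exp_log (div_pos hsum hc), ← sum_div]
  field_simp

/-- `N` is the fourth backward difference of the truncated power `t₊³ / 6`. -/
theorem cubicN_eq_truncatedPowers (t : ℝ) :
    cubicN t = (max t 0 ^ 3 - 4 * max (t - 1) 0 ^ 3 + 6 * max (t - 2) 0 ^ 3
      - 4 * max (t - 3) 0 ^ 3 + max (t - 4) 0 ^ 3) / 6 := by
  unfold cubicN
  grind

theorem cubicN_eq_zero_of_notMem_Ioo {t : ℝ} (ht : t ∉ Set.Ioo 0 4) : cubicN t = 0 := by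
  rw [cubicN_eq_truncatedPowers]
  grind

theorem hasDerivAt_cubicN (t : ℝ) :
    HasDerivAt cubicN ((max t 0 ^ 2 - 4 * max (t - 1) 0 ^ 2 + 6 * max (t - 2) 0 ^ 2
      - 4 * max (t - 3) 0 ^ 2 + max (t - 4) 0 ^ 2) / 2) t := by
  have hpow (c : ℝ) : HasDerivAt (fun s => max (s - c) 0 ^ 3) (3 * max (t - c) 0 ^ 2) t := by
    simpa using (hasDerivAt_max_zero_pow (n := 3) (by simp) (t - c)).comp_sub_const t c
  have hpow_zero : HasDerivAt (fun s => max s 0 ^ 3) (3 * max t 0 ^ 2) t := by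
    simpa only [sub_zero] using hpow 0
  rw [funext cubicN_eq_truncatedPowers]
  exact (((((hpow_zero.sub ((hpow 1).const_mul 4)).add ((hpow 2).const_mul 6)).sub
    ((hpow 3).const_mul 4)).add (hpow 4)).div_const 6).congr_deriv (by ring)

theorem hasDerivAt_cubicN_of_notMem_Ioo {t : ℝ} (ht : t ∉ Set.Ioo 0 4) :
    HasDerivAt cubicN 0 t := by
  convert hasDerivAt_cubicN t using 1
  grind

theorem sum_range_cubicN_mul_affine {t : ℝ} (ht : t ∈ Set.Icc 0 1) (a b : ℝ) :
    ∑ r ∈ range 4, cubicN (t + (3 - r)) * (a + r * b) = a + (1 + t) * b := by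
  norm_num only [sum_range_succ, sum_range_zero]
  simp only [cubicN_eq_truncatedPowers]
  grind

section Basis

variable {k0 k : ℝ}

theorem sub_knot_div_mem_Ioo_iff (hk : 0 < k) {j : ℤ} {x : ℝ} :
    (x - knot k0 k (j - 3)) / k ∈ Set.Ioo 0 4 ↔
      x ∈ Set.Ioo (knot k0 k (j - 3)) (knot k0 k (j + 1)) := by
  simp only [Set.mem_Ioo, div_pos_iff_of_pos_right hk, div_lt_iff₀ hk, knot]
  push_cast
  grind

theorem strictMono_knot (hk : 0 < k) : StrictMono (knot k0 k) := fun i j hij => by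
  simpa [knot, hk] using hij

theorem Bspl_eq_zero_of_notMem_Ioo (hk : 0 < k) {j : ℕ} {x : ℝ}
    (hx : x ∉ Set.Ioo (knot k0 k (j - 3)) (knot k0 k (j + 1))) : Bspl k0 k j x = 0 :=
  cubicN_eq_zero_of_notMem_Ioo (mt (sub_knot_div_mem_Ioo_iff hk).1 hx)

theorem hasDerivAt_Bspl_of_notMem_Ioo (hk : 0 < k) {j : ℕ} {x : ℝ}
    (hx : x ∉ Set.Ioo (knot k0 k (j - 3)) (knot k0 k (j + 1))) :
    HasDerivAt (Bspl k0 k j) 0 x := by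
  have houter := hasDerivAt_cubicN_of_notMem_Ioo (mt (sub_knot_div_mem_Ioo_iff hk).1 hx)
  have hinner := ((hasDerivAt_id x).sub_const (knot k0 k (j - 3))).div_const k
  exact (houter.comp x hinner).congr_deriv (zero_mul _)

theorem Bspl_knot_add_mul (hk : k ≠ 0) (i : ℤ) (j : ℕ) (s : ℝ) :
    Bspl k0 k j (knot k0 k i + s * k) = cubicN (s + (i - j + 3)) := by
  rw [Bspl]
  congr 1
  simp only [knot]
  push_cast
  field_simp
  ring

theorem sum_Icc_Bspl_mul_knot_knot_add_mul (hk : k ≠ 0) (i : ℕ) {t : ℝ} (ht : t ∈ Set.Icc 0 1) :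
    ∑ j ∈ Icc i (i + 3), Bspl k0 k j (knot k0 k i + t * k) * knot k0 k (j - 1) =
      knot k0 k i + t * k := by
  have hBspl (r : ℕ) : Bspl k0 k (i + r) (knot k0 k i + t * k) = cubicN (t + (3 - r)) := by
    rw [Bspl_knot_add_mul hk]
    push_cast
    ring_nf
  have hknot (r : ℕ) : knot k0 k ((i + r : ℕ) - 1) = knot k0 k (i - 1) + r * k := by
    simp only [knot]
    push_cast
    ring
  calc ∑ j ∈ Icc i (i + 3), Bspl k0 k j (knot k0 k i + t * k) * knot k0 k (j - 1)
      = ∑ r ∈ range 4, cubicN (t + (3 - r)) * (knot k0 k (i - 1) + r * k) := by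
        rw [← Ico_add_one_right_eq_Icc, sum_Ico_eq_sum_range]
        simp only [hBspl, hknot, add_assoc, add_tsub_cancel_left, Nat.reduceAdd]
    _ = knot k0 k (i - 1) + (1 + t) * k := sum_range_cubicN_mul_affine ht _ _
    _ = knot k0 k i + t * k := by
        simp only [knot]
        push_cast
        ring

theorem sum_Bspl_mul_knot_of_mem_Icc (hk : 0 < k) {i : ℕ} {x : ℝ} {s : Finset ℕ}
    (hx : x ∈ Set.Icc (knot k0 k i) (knot k0 k (i + 1))) (hs : Icc i (i + 3) ⊆ s) :
    ∑ j ∈ s, Bspl k0 k j x * knot k0 k (j - 1) = x := by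
  have hvanish : ∀ j ∈ s, j ∉ Icc i (i + 3) → Bspl k0 k j x * knot k0 k (j - 1) = 0 := by
    intro j _ hj
    rw [Bspl_eq_zero_of_notMem_Ioo hk, zero_mul]
    rintro ⟨hleft, hright⟩
    have hij := (strictMono_knot hk).lt_iff_lt.1 (hx.1.trans_lt hright)
    have hji := (strictMono_knot hk).lt_iff_lt.1 (hleft.trans_le hx.2)
    exact hj (mem_Icc.2 ⟨by lia, by lia⟩)
  obtain ⟨t, rfl⟩ : ∃ t, x = knot k0 k i + t * k :=
    ⟨(x - knot k0 k i) / k, by rw [div_mul_cancel₀ _ hk.ne', add_sub_cancel]⟩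
  have hstep : knot k0 k (i + 1) = knot k0 k i + 1 * k := by
    simp only [knot]
    push_cast
    ring
  rw [Set.mem_Icc, hstep, le_add_iff_nonneg_right, add_le_add_iff_left,
    mul_nonneg_iff_of_pos_right hk, mul_le_mul_iff_left₀ hk] at hx
  rw [← sum_subset hs hvanish, sum_Icc_Bspl_mul_knot_knot_add_mul hk.ne' i hx]

theorem sum_Icc_Bspl_mul_knot (hk : 0 < k) {m n : ℕ} (hmn : m < n) {x : ℝ}
    (hx : x ∈ Set.Icc (knot k0 k m) (knot k0 k n)) :
    ∑ j ∈ Icc m (n + 2), Bspl k0 k j x * knot k0 k (j - 1) = x := by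
  obtain ⟨i, hi, hxi⟩ := exists_mem_Icc_succ (fun i : ℕ => knot k0 k i) hmn hx
  rw [mem_Ico] at hi
  exact sum_Bspl_mul_knot_of_mem_Icc hk hxi (Icc_subset_Icc hi.1 (by lia))

end Basis

section Coefficients

variable {D : ℕ} {k0 k : ℝ} {β : Fin D → ℝ}

theorem exp_gam_boundary (hk : 0 < k) {j : ℕ} (hj : j ∈ Icc 2 4 ∪ Icc (D + 5) (D + 7)) :
    Real.exp (gam D k0 k β j) = k := by
  simp only [mem_union, mem_Icc] at hj
  rw [gam, if_neg (by lia), if_pos (by lia), Real.exp_log hk]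

theorem gam_interior (i : Fin D) :
    gam D k0 k β (5 + i) =
      β i - Real.log ((∑ d, Real.exp (β d)) / ((D : ℝ) * k)) := by
  have hi := i.isLt
  rw [gam, if_neg (by lia), if_neg (by lia), dif_pos (by lia)]
  congr
  lia

theorem sum_exp_gam_interior (hk : 0 < k) :
    ∑ l ∈ Ioc 4 (D + 4), Real.exp (gam D k0 k β l) = D * k := by
  calc ∑ l ∈ Ioc 4 (D + 4), Real.exp (gam D k0 k β l)
      = ∑ i : Fin D, Real.exp (gam D k0 k β (5 + i)) := by
        rw [← Ico_add_one_add_one_eq_Ioc, sum_Ico_eq_sum_range, Nat.add_sub_add_right,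
          Nat.add_sub_cancel, sum_range]
        rfl
    _ = ∑ i : Fin D, Real.exp (β i - Real.log ((∑ d, Real.exp (β d)) / ((D : ℝ) * k))) := by
        simp only [gam_interior]
    _ = D * k := by
        rcases D.eq_zero_or_pos with rfl | hD
        · simp
        · have : NeZero D := ⟨hD.ne'⟩
          exact sum_exp_sub_log_sum_exp_div β (by positivity)

/-- The coefficient `γ_1 + ∑_{ℓ=2}^j exp γ_ℓ` of the basis function `B_j` in the spline that
defines `H` on `[k_1, k_m]`. -/
def splineCoeff (D : ℕ) (k0 k : ℝ) (β : Fin D → ℝ) (j : ℕ) : ℝ :=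
  gam D k0 k β 1 + ∑ l ∈ Icc 2 j, Real.exp (gam D k0 k β l)

theorem splineCoeff_one : splineCoeff D k0 k β 1 = knot k0 k 0 := by
  simp [splineCoeff, gam, knot]

theorem splineCoeff_eq_add_sum_Ioc {i j : ℕ} (hi : 1 ≤ i) (hij : i ≤ j) :
    splineCoeff D k0 k β j =
      splineCoeff D k0 k β i + ∑ l ∈ Ioc i j, Real.exp (gam D k0 k β l) := by
  have hIcc (n : ℕ) : Icc 2 n = Ioc 1 n := rfl
  rw [splineCoeff, splineCoeff, hIcc, hIcc, add_assoc, sum_Ioc_consecutive _ hi hij]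

theorem splineCoeff_eq_knot_of_exp_gam_eq {i j : ℕ} (hi : 1 ≤ i) (hij : i ≤ j)
    (hbase : splineCoeff D k0 k β i = knot k0 k (i - 1))
    (hstep : ∀ l ∈ Ioc i j, Real.exp (gam D k0 k β l) = k) :
    splineCoeff D k0 k β j = knot k0 k (j - 1) := by
  rw [splineCoeff_eq_add_sum_Ioc hi hij, hbase, sum_congr rfl hstep, sum_const, Nat.card_Ioc,
    nsmul_eq_mul, Nat.cast_sub hij]
  simp only [knot]
  push_cast
  ring

theorem splineCoeff_eq_knot_of_le_four (hk : 0 < k) {j : ℕ} (hj : 1 ≤ j) (hj4 : j ≤ 4) :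
    splineCoeff D k0 k β j = knot k0 k (j - 1) := by
  refine splineCoeff_eq_knot_of_exp_gam_eq le_rfl hj splineCoeff_one fun l hl => ?_
  rw [mem_Ioc] at hl
  exact exp_gam_boundary hk (mem_union_left _ (mem_Icc.2 ⟨by lia, by lia⟩))

theorem splineCoeff_add_four (hk : 0 < k) :
    splineCoeff D k0 k β (D + 4) = knot k0 k ((D + 4 : ℕ) - 1) := by
  rw [splineCoeff_eq_add_sum_Ioc (by simp) (Nat.le_add_left 4 D),
    splineCoeff_eq_knot_of_le_four hk (by simp) le_rfl, sum_exp_gam_interior hk]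
  simp only [knot]
  push_cast
  ring

theorem splineCoeff_eq_knot_of_add_four_le (hk : 0 < k) {j : ℕ} (hj : D + 4 ≤ j)
    (hj7 : j ≤ D + 7) : splineCoeff D k0 k β j = knot k0 k (j - 1) := by
  refine splineCoeff_eq_knot_of_exp_gam_eq (by lia) hj (splineCoeff_add_four hk) fun l hl => ?_
  rw [mem_Ioc] at hl
  exact exp_gam_boundary hk (mem_union_right _ (mem_Icc.2 ⟨by lia, by lia⟩))

theorem splineCoeff_eq_knot_of_notMem_interior (hk : 0 < k) {j : ℕ} (hj : j ∈ Icc 1 (D + 7))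
    (hj' : j ∉ Icc 5 (D + 3)) : splineCoeff D k0 k β j = knot k0 k (j - 1) := by
  rw [mem_Icc] at hj hj'
  rcases le_or_gt j 4 with h4 | h4
  · exact splineCoeff_eq_knot_of_le_four hk hj.1 h4
  · exact splineCoeff_eq_knot_of_add_four_le hk (by lia) hj.2

end Coefficients

section Transformation

variable {D : ℕ} {k0 k : ℝ} {β : Fin D → ℝ}

theorem Ioo_knot_subset_Ioo_of_mem_Icc (hk : 0 < k) {j : ℕ} (hj : j ∈ Icc 5 (D + 3)) :
    Set.Ioo (knot k0 k (j - 3)) (knot k0 k (j + 1)) ⊆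
      Set.Ioo (knot k0 k 2) (knot k0 k (D + 4)) := by
  rw [mem_Icc] at hj
  exact Set.Ioo_subset_Ioo ((strictMono_knot hk).monotone (by lia))
    ((strictMono_knot hk).monotone (by lia))

theorem Hfun_eq_add_sum_interior (hk : 0 < k) (x : ℝ) :
    Hfun D k0 k β x = x + ∑ j ∈ Icc 5 (D + 3),
      Bspl k0 k j x * (splineCoeff D k0 k β j - knot k0 k (j - 1)) := by
  rw [Hfun]
  split_ifs with hx
  · have hsub : Icc 5 (D + 3) ⊆ Icc 1 (D + 7) := Icc_subset_Icc (by lia) (by lia)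
    have hvanish : ∀ j ∈ Icc 1 (D + 7), j ∉ Icc 5 (D + 3) →
        Bspl k0 k j x * (splineCoeff D k0 k β j - knot k0 k (j - 1)) = 0 := fun j hj hj' => by
      rw [splineCoeff_eq_knot_of_notMem_interior hk hj hj', sub_self, mul_zero]
    have hid : ∑ j ∈ Icc 1 (D + 7), Bspl k0 k j x * knot k0 k (j - 1) = x :=
      sum_Icc_Bspl_mul_knot hk (m := 1) (n := D + 5) (by lia) (mod_cast hx)
    rw [sum_subset hsub hvanish]
    simp only [mul_sub, sum_sub_distrib, hid, add_sub_cancel]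
    rfl
  · have houtside : x ∉ Set.Ioo (knot k0 k 2) (knot k0 k (D + 4)) := fun h =>
      hx ⟨((strictMono_knot hk).monotone (by lia)).trans h.1.le,
        h.2.le.trans ((strictMono_knot hk).monotone (by lia))⟩
    rw [sum_eq_zero, add_zero]
    intro j hj
    rw [Bspl_eq_zero_of_notMem_Ioo hk fun h => houtside (Ioo_knot_subset_Ioo_of_mem_Icc hk hj h),
      zero_mul]

end Transformation

theorem H_unit_slope_general (D : ℕ) (k0 k : ℝ) (hk : 0 < k) (β : Fin D → ℝ) (x : ℝ)
    (hx : x ∉ Set.Ioo (knot k0 k 2) (knot k0 k ((D : ℤ) + 4))) :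
    HasDerivAt (Hfun D k0 k β) 1 x := by
  have hsum : HasDerivAt (fun y => ∑ j ∈ Icc 5 (D + 3),
      Bspl k0 k j y * (splineCoeff D k0 k β j - knot k0 k (j - 1)))
      (∑ j ∈ Icc 5 (D + 3), 0 * (splineCoeff D k0 k β j - knot k0 k (j - 1))) x :=
    HasDerivAt.fun_sum fun j hj => (hasDerivAt_Bspl_of_notMem_Ioo hk fun h =>
      hx (Ioo_knot_subset_Ioo_of_mem_Icc hk hj h)).mul_const _
  rw [funext (Hfun_eq_add_sum_interior hk)]
  exact ((hasDerivAt_id x).add hsum).congr_deriv (by simp)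

/-- For every `β ∈ ℝ^D` and every `x ∈ [k_1, a] ∪ [b, k_m]`
(where `a = k_2`, `b = k_{m−1}`, `m = D + 5`), `H` is differentiable at `x`
with derivative `H′(x) = 1`. -/
theorem H_unit_slope (D : ℕ) (hD : 1 ≤ D) (k0 k : ℝ) (hk : 0 < k) (β : Fin D → ℝ)
    (x : ℝ)
    (hx : x ∈ Set.Icc (knot k0 k 1) (knot k0 k 2) ∪
          Set.Icc (knot k0 k ((D : ℤ) + 4)) (knot k0 k ((D : ℤ) + 5))) :
    HasDerivAt (Hfun D k0 k β) 1 x :=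
  H_unit_slope_general D k0 k hk β x fun h =>
    hx.elim (fun hleft => hleft.2.not_gt h.1) fun hright => hright.1.not_gt h.2

end
end

section
/- If all entries of β are equal, i.e. β = β₀·(1, …, 1) for some β₀ ∈ ℝ, then γ_j = log k for every j = 2, …, J, and consequently H is the identity function: H(x) = x for all x ∈ ℝ. -/
open MeasureTheory Finset

noncomputable section

/-!
On a cell `[k_n, k_{n+1}]` only `B_n, …, B_{n+3}` can be nonzero. There they sum to `1`, and their
first moment makes the spline with coefficients `k_{j-1}` (the Greville abscissae, i.e. the
midpoints of the supports of the `B_j`) equal to `x`. If `β` is constant then every increment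
`exp γ_j` is `k`, so the coefficients of `H` are exactly these abscissae.
-/

section CardinalSpline

variable {t u : ℝ}

theorem cubicN_of_nonpos (ht : t ≤ 0) : cubicN t = 0 := by
  rcases ht.eq_or_lt with rfl | ht
  · norm_num [cubicN]
  · unfold cubicN
    split_ifs <;> first | rfl | (exfalso; linarith)

theorem cubicN_of_four_le (ht : 4 ≤ t) : cubicN t = 0 := by
  rcases ht.eq_or_lt with rfl | ht
  · norm_num [cubicN]
  · unfold cubicN
    split_ifs <;> first | rfl | (exfalso; linarith)

theorem cubicN_of_mem_Icc_zero_one (ht : t ∈ Set.Icc 0 1) : cubicN t = t ^ 3 / 6 := by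
  rcases ht.2.eq_or_lt with rfl | ht1
  · norm_num [cubicN]
  · exact if_pos ⟨ht.1, ht1⟩

theorem cubicN_of_mem_Icc_one_two (ht : t ∈ Set.Icc 1 2) :
    cubicN t = (-3 * t ^ 3 + 12 * t ^ 2 - 12 * t + 4) / 6 := by
  obtain ⟨ht1, ht2⟩ := ht
  rcases ht2.eq_or_lt with rfl | ht2
  · norm_num [cubicN]
  · rw [cubicN, if_neg (by grind), if_pos ⟨ht1, ht2⟩]

theorem cubicN_of_mem_Icc_two_three (ht : t ∈ Set.Icc 2 3) :
    cubicN t = (3 * t ^ 3 - 24 * t ^ 2 + 60 * t - 44) / 6 := by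
  obtain ⟨ht2, ht3⟩ := ht
  rcases ht3.eq_or_lt with rfl | ht3
  · norm_num [cubicN]
  · rw [cubicN, if_neg (by grind), if_neg (by grind), if_pos ⟨ht2, ht3⟩]

theorem cubicN_of_mem_Icc_three_four (ht : t ∈ Set.Icc 3 4) : cubicN t = (4 - t) ^ 3 / 6 := by
  obtain ⟨ht3, ht4⟩ := ht
  rw [cubicN, if_neg (by grind), if_neg (by grind), if_neg (by grind), if_pos ⟨ht3, ht4⟩]

theorem sum_range_four_cubicN_mul (hu : u ∈ Set.Icc 0 1) (c : ℕ → ℝ) :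
    ∑ i ∈ range 4, cubicN (u + 3 - i) * c i =
      (1 - u) ^ 3 / 6 * c 0 + (3 * u ^ 3 - 6 * u ^ 2 + 4) / 6 * c 1 +
        (-3 * u ^ 3 + 3 * u ^ 2 + 3 * u + 1) / 6 * c 2 + u ^ 3 / 6 * c 3 := by
  obtain ⟨hu0, hu1⟩ := hu
  simp only [sum_range_succ, range_zero, sum_empty, Nat.cast_zero, Nat.cast_one, Nat.cast_ofNat]
  rw [cubicN_of_mem_Icc_three_four ⟨by linarith, by linarith⟩,
    cubicN_of_mem_Icc_two_three ⟨by linarith, by linarith⟩,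
    cubicN_of_mem_Icc_one_two ⟨by linarith, by linarith⟩,
    cubicN_of_mem_Icc_zero_one ⟨by linarith, by linarith⟩]
  ring

theorem sum_range_four_cubicN (hu : u ∈ Set.Icc 0 1) :
    ∑ i ∈ range 4, cubicN (u + 3 - i) = 1 := by
  have h := sum_range_four_cubicN_mul hu fun _ => 1
  simp only [mul_one] at h
  rw [h]
  ring

theorem sum_range_four_cubicN_mul_natCast (hu : u ∈ Set.Icc 0 1) :
    ∑ i ∈ range 4, cubicN (u + 3 - i) * (i : ℝ) = u + 1 := by
  rw [sum_range_four_cubicN_mul hu fun i => (i : ℝ)]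
  push_cast
  ring

end CardinalSpline

theorem exists_mem_Icc_of_mem_Icc_succ {α : Type*} [LinearOrder α] (f : ℕ → α) {x : α} {a b : ℕ}
    (hab : a ≤ b) (hx : x ∈ Set.Icc (f a) (f (b + 1))) :
    ∃ n ∈ Icc a b, x ∈ Set.Icc (f n) (f (n + 1)) := by
  induction b, hab using Nat.le_induction with
  | base => exact ⟨a, mem_Icc.2 ⟨le_rfl, le_rfl⟩, hx⟩
  | succ b hab ih =>
    rcases le_total x (f (b + 1)) with hxb | hbx
    · obtain ⟨n, hn, hxn⟩ := ih ⟨hx.1, hxb⟩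
      exact ⟨n, Icc_subset_Icc_right b.le_succ hn, hxn⟩
    · exact ⟨b + 1, mem_Icc.2 ⟨by omega, le_rfl⟩, hbx, hx.2⟩

section Basis

variable {k0 k x : ℝ}

theorem knot_le_knot (hk : 0 ≤ k) {i j : ℤ} (hij : i ≤ j) : knot k0 k i ≤ knot k0 k j := by
  unfold knot
  gcongr

theorem Bspl_add (hk : k ≠ 0) (n i : ℕ) (x : ℝ) :
    Bspl k0 k (n + i) x = cubicN ((x - knot k0 k n) / k + 3 - i) := by
  unfold Bspl knot
  congr 1
  push_cast
  field_simp
  ring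

theorem Bspl_eq_zero_of_le_knot (hk : 0 ≤ k) {j : ℕ} (hx : x ≤ knot k0 k (j - 3)) :
    Bspl k0 k j x = 0 :=
  cubicN_of_nonpos (div_nonpos_of_nonpos_of_nonneg (sub_nonpos.2 hx) hk)

theorem Bspl_eq_zero_of_knot_le (hk : 0 < k) {j : ℕ} (hx : knot k0 k (j + 1) ≤ x) :
    Bspl k0 k j x = 0 := by
  refine cubicN_of_four_le ((le_div_iff₀ hk).2 ?_)
  unfold knot at hx ⊢
  push_cast at hx ⊢
  linarith

theorem sum_Bspl_mul_eq_sum_range_four (hk : 0 < k) {n : ℕ}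
    (hx : x ∈ Set.Icc (knot k0 k n) (knot k0 k (n + 1))) {s : Finset ℕ}
    (hs : Icc n (n + 3) ⊆ s) (c : ℕ → ℝ) :
    ∑ j ∈ s, Bspl k0 k j x * c j = ∑ i ∈ range 4, Bspl k0 k (n + i) x * c (n + i) := by
  have hzero : ∀ j ∈ s, j ∉ Icc n (n + 3) → Bspl k0 k j x * c j = 0 := by
    intro j _ hj
    rw [mem_Icc, not_and_or, not_le, not_le] at hj
    rcases hj with hj | hj
    · rw [Bspl_eq_zero_of_knot_le hk ((knot_le_knot hk.le (by omega)).trans hx.1), zero_mul]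
    · rw [Bspl_eq_zero_of_le_knot hk.le (hx.2.trans (knot_le_knot hk.le (by omega))), zero_mul]
  rw [← sum_subset hs hzero, ← Ico_add_one_right_eq_Icc, sum_Ico_eq_sum_range,
    show n + 3 + 1 - n = 4 by omega]

theorem sum_range_four_Bspl_mul_knot (hk : 0 < k) {n : ℕ}
    (hx : x ∈ Set.Icc (knot k0 k n) (knot k0 k (n + 1))) :
    ∑ i ∈ range 4, Bspl k0 k (n + i) x * knot k0 k ((n + i : ℕ) - 1) = x := by
  set u := (x - knot k0 k n) / k with hu_def
  have hu : u ∈ Set.Icc 0 1 := by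
    refine ⟨div_nonneg (sub_nonneg.2 hx.1) hk.le, (div_le_one hk).2 ?_⟩
    have hx2 := hx.2
    unfold knot at hx2 ⊢
    push_cast at hx2 ⊢
    linarith
  calc ∑ i ∈ range 4, Bspl k0 k (n + i) x * knot k0 k ((n + i : ℕ) - 1)
      = ∑ i ∈ range 4, (cubicN (u + 3 - i) * knot k0 k (n - 1) + cubicN (u + 3 - i) * i * k) := by
        refine sum_congr rfl fun i _ => ?_
        rw [Bspl_add hk.ne', ← hu_def]
        unfold knot
        push_cast
        ring
    _ = knot k0 k (n - 1) + (u + 1) * k := by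
        rw [sum_add_distrib, ← sum_mul, ← sum_mul, sum_range_four_cubicN hu,
          sum_range_four_cubicN_mul_natCast hu, one_mul]
    _ = x := by
        rw [hu_def, add_mul, div_mul_cancel₀ _ hk.ne']
        unfold knot
        push_cast
        ring

theorem sum_Bspl_mul_knot (hk : 0 < k) {a b : ℕ} (hab : a ≤ b)
    (hx : x ∈ Set.Icc (knot k0 k a) (knot k0 k (b + 1))) :
    ∑ j ∈ Icc a (b + 3), Bspl k0 k j x * knot k0 k (j - 1) = x := by
  obtain ⟨n, hn, hxn⟩ := exists_mem_Icc_of_mem_Icc_succ (fun n : ℕ => knot k0 k n) hab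
    (by exact_mod_cast hx)
  rw [Nat.cast_add_one] at hxn
  obtain ⟨han, hnb⟩ := mem_Icc.1 hn
  rw [sum_Bspl_mul_eq_sum_range_four hk hxn (Icc_subset_Icc han (by omega))
    fun j => knot k0 k (j - 1)]
  exact sum_range_four_Bspl_mul_knot hk hxn

end Basis

section Coefficients

variable {D : ℕ} {k0 k : ℝ}

theorem gam_one (β : Fin D → ℝ) : gam D k0 k β 1 = k0 :=
  if_pos rfl

theorem sub_log_sum_exp_const_div (hD : D ≠ 0) (hk : k ≠ 0) (β0 : ℝ) :
    β0 - Real.log ((∑ _d : Fin D, Real.exp β0) / (D * k)) = Real.log k := by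
  have hmean : (∑ _d : Fin D, Real.exp β0) / (D * k) = Real.exp β0 / k := by
    rw [Fin.sum_const, nsmul_eq_mul, mul_div_mul_left _ _ (Nat.cast_ne_zero.2 hD)]
  rw [hmean, Real.log_div (Real.exp_ne_zero β0) hk, Real.log_exp, sub_sub_cancel]

theorem gam_const (hk : k ≠ 0) (β0 : ℝ) {j : ℕ} (hj2 : 2 ≤ j) (hjD : j ≤ D + 7) :
    gam D k0 k (fun _ => β0) j = Real.log k := by
  rw [gam, if_neg (by omega)]
  split_ifs with hboundary hinterior
  · rfl
  · exact sub_log_sum_exp_const_div (by omega) hk β0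
  · omega

theorem gam_one_add_sum_exp_gam_const (hk : 0 < k) (β0 : ℝ) {j : ℕ} (hj1 : 1 ≤ j)
    (hjD : j ≤ D + 7) :
    gam D k0 k (fun _ => β0) 1 + ∑ l ∈ Icc 2 j, Real.exp (gam D k0 k (fun _ => β0) l) =
      knot k0 k (j - 1) := by
  have hexp : ∀ l ∈ Icc 2 j, Real.exp (gam D k0 k (fun _ => β0) l) = k := by
    intro l hl
    obtain ⟨hl2, hlj⟩ := mem_Icc.1 hl
    rw [gam_const hk.ne' β0 hl2 (hlj.trans hjD), Real.exp_log hk]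
  rw [gam_one, sum_congr rfl hexp, sum_const, Nat.card_Icc, nsmul_eq_mul,
    show j + 1 - 2 = j - 1 by omega, Nat.cast_sub hj1, knot]
  push_cast
  rfl

end Coefficients

/-- If all entries of `β` are equal, i.e. `β = β₀·(1, …, 1)`, then
`γ_j = log k` for every `j = 2, …, J` (with `J = D + 7`), and consequently `H` is the
identity function. -/
theorem H_collapse_to_identity (D : ℕ) (hD : 1 ≤ D) (k0 k : ℝ) (hk : 0 < k)
    (β0 : ℝ) :
    (∀ j : ℕ, 2 ≤ j → j ≤ D + 7 → gam D k0 k (fun _ => β0) j = Real.log k) ∧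
    (∀ x : ℝ, Hfun D k0 k (fun _ => β0) x = x) := by
  refine ⟨fun j => gam_const hk.ne' β0, fun x => ?_⟩
  rw [Hfun]
  split_ifs with hx
  · calc ∑ j ∈ Icc 1 (D + 7), Bspl k0 k j x * (gam D k0 k (fun _ => β0) 1 +
          ∑ l ∈ Icc 2 j, Real.exp (gam D k0 k (fun _ => β0) l))
        = ∑ j ∈ Icc 1 (D + 7), Bspl k0 k j x * knot k0 k (j - 1) := by
          refine sum_congr rfl fun j hj => ?_
          obtain ⟨hj1, hjD⟩ := mem_Icc.1 hj
          rw [gam_one_add_sum_exp_gam_const hk β0 hj1 hjD]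
      _ = x := sum_Bspl_mul_knot (b := D + 4) hk (by omega) (by simpa [add_assoc] using hx)
  · rfl

end
end
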